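/- Let Cens be a truthful, effective and minimally invasive censor, let (KB, AK, Sec) be a privacy configuration, and let q be a query sequence with q_i = q_j for some indices i, j. Then Cens_PK(q)_i = Cens_PK(q)_j. -/

import Mathlib

/-- A logic: a set (type) of formulas with a consequence relation satisfying
reflexivity, weakening and transitivity (cut). -/
structure Logic where
  Fml : Type
  Proves : Set Fml → Fml → Prop
  refl : ∀ A : Fml, Proves {A} A
  weaken : ∀ (Γ Δ : Set Fml) (A : Fml), Proves Γ A → Proves (Γ ∪ Δ) A
  cut : ∀ (Γ Δ : Set Fml) (C A : Fml),
    Proves Γ C → Proves (Δ ∪ {C}) A → Proves (Γ ∪ Δ) A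

/-- Modal formulas over a logic `L`: boxed `L`-formulas, falsum, implication. -/
inductive MFml (L : Logic) : Type where
  | box : L.Fml → MFml L
  | bot : MFml L
  | imp : MFml L → MFml L → MFml L

/-- ¬A := A → ⊥ -/
def MFml.neg {L : Logic} (A : MFml L) : MFml L := MFml.imp A MFml.bot

/-- ⊤ := ⊥ → ⊥ -/
def MFml.top {L : Logic} : MFml L := MFml.imp MFml.bot MFml.bot

/-- A ∨ B := ¬A → B -/
def MFml.or {L : Logic} (A B : MFml L) : MFml L := MFml.imp (MFml.neg A) B

/-- An M-model is a set of sets of `L`-formulas. -/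
abbrev MModel (L : Logic) := Set (Set L.Fml)

/-- Truth of a modal formula in an M-model. -/
def Sat {L : Logic} (M : MModel L) : MFml L → Prop
  | MFml.box A => ∀ w ∈ M, L.Proves w A
  | MFml.bot => False
  | MFml.imp A B => Sat M A → Sat M B

/-- `M ⊩ Γ`. -/
def SatSet {L : Logic} (M : MModel L) (Γ : Set (MFml L)) : Prop :=
  ∀ A ∈ Γ, Sat M A

/-- Γ is satisfiable. -/
def Satisfiable {L : Logic} (Γ : Set (MFml L)) : Prop :=
  ∃ M : MModel L, SatSet M Γ

/-- Γ ⊨ A. -/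
def Entails {L : Logic} (Γ : Set (MFml L)) (A : MFml L) : Prop :=
  ∀ M : MModel L, SatSet M Γ → Sat M A

/-- A privacy configuration (KB, AK, Sec). -/
structure PrivacyConfig (L : Logic) where
  KB : Set L.Fml
  AK : Set (MFml L)
  Sec : Set L.Fml
  consistent : ∃ A : L.Fml, ¬ L.Proves KB A
  truthfulStart : ∀ A ∈ AK, Sat ({KB} : MModel L) A
  hiddenSecrets : ∀ s ∈ Sec, ¬ Entails AK (MFml.box s)

/-- The answers 𝔸 = {t, u, r}. -/
inductive Ans : Type
  | t | u | r
deriving DecidableEq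

open Classical in
/-- eval(KB, q) := t if KB ⊢ q and u otherwise. -/
noncomputable def evalKB (L : Logic) (KB : Set L.Fml) (q : L.Fml) : Ans :=
  if L.Proves KB q then Ans.t else Ans.u

/-- A censor assigns an answering function (on infinite query sequences,
indexed by ℕ) to each privacy configuration. -/
abbrev Censor (L : Logic) := PrivacyConfig L → (ℕ → L.Fml) → (ℕ → Ans)

/-- A censor is continuous iff answers on an initial segment only depend on
the queries in that initial segment. -/
def ContinuousCensor {L : Logic} (Cens : Censor L) : Prop :=
  ∀ (PK : PrivacyConfig L) (q q' : ℕ → L.Fml) (n : ℕ),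
    (∀ i < n, q i = q' i) → ∀ i < n, Cens PK q i = Cens PK q' i

/-- A censor is truthful iff each answer is either the correct evaluation or refusal. -/
def Truthful {L : Logic} (Cens : Censor L) : Prop :=
  ∀ (PK : PrivacyConfig L) (q : ℕ → L.Fml) (i : ℕ),
    Cens PK q i = evalKB L PK.KB (q i) ∨ Cens PK q i = Ans.r

/-- Content of an answer to a query. -/
def contAns {L : Logic} (q : L.Fml) : Ans → MFml L
  | Ans.t => MFml.box q
  | Ans.u => MFml.neg (MFml.box q)
  | Ans.r => MFml.top

/-- The content of the answers of a censor to a query sequence up to `n`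
(0-based: queries with index `< n`), including the a priori knowledge. -/
def cont {L : Logic} (Cens : Censor L) (PK : PrivacyConfig L)
    (q : ℕ → L.Fml) (n : ℕ) : Set (MFml L) :=
  {F | ∃ i < n, F = contAns (q i) (Cens PK q i)} ∪ PK.AK

/-- The full content of a knowledge base. -/
noncomputable def fullContent (L : Logic) (KB : Set L.Fml) : Set (MFml L) :=
  {F | ∃ A : L.Fml, F = contAns A (evalKB L KB A)}

/-- A censor is credible iff the content of its answers is always satisfiable. -/
def Credible {L : Logic} (Cens : Censor L) : Prop :=
  ∀ (PK : PrivacyConfig L) (q : ℕ → L.Fml) (n : ℕ), Satisfiable (cont Cens PK q n)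

/-- A censor is effective iff the content of its answers never entails a boxed secret. -/
def Effective {L : Logic} (Cens : Censor L) : Prop :=
  ∀ (PK : PrivacyConfig L) (q : ℕ → L.Fml) (n : ℕ),
    ∀ s ∈ PK.Sec, ¬ Entails (cont Cens PK q n) (MFml.box s)

/-- A censor is minimally invasive iff whenever it distorts an answer,
replacing that answer by the correct evaluation (keeping the earlier answers)
would violate effectiveness or credibility. -/
def MinimallyInvasive {L : Logic} (Cens : Censor L) : Prop :=
  ∀ (PK : PrivacyConfig L) (q : ℕ → L.Fml) (i : ℕ),
    Cens PK q i ≠ evalKB L PK.KB (q i) →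
    ∀ Cens' : Censor L,
      (∀ j < i, Cens' PK q j = Cens PK q j) →
      Cens' PK q i = evalKB L PK.KB (q i) →
      ∃ n : ℕ,
        (∃ s ∈ PK.Sec, Entails (cont Cens' PK q n) (MFml.box s)) ∨
        ¬ Satisfiable (cont Cens' PK q n)

/-- A censor is repudiating iff for every privacy configuration and query
sequence there are alternative knowledge bases, not entailing any secret,
producing the same answers on each initial segment. -/
def Repudiating {L : Logic} (Cens : Censor L) : Prop :=
  ∀ (PK : PrivacyConfig L) (q : ℕ → L.Fml),
    ∃ PKs : ℕ → PrivacyConfig L,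
      (∀ i, (PKs i).AK = PK.AK ∧ (PKs i).Sec = PK.Sec) ∧
      (∀ n, ∀ i < n, Cens PK q i = Cens (PKs n) q i) ∧
      (∀ i, ∀ s ∈ PK.Sec, ¬ L.Proves (PKs i).KB s)

/-- A censor is non-refusing iff it never answers `r`. -/
def NonRefusing {L : Logic} (Cens : Censor L) : Prop :=
  ∀ (PK : PrivacyConfig L) (q : ℕ → L.Fml) (i : ℕ), Cens PK q i ≠ Ans.r

theorem aux_sat_eval {L : Logic} (KB : Set L.Fml) (A : L.Fml) :
    Sat ({KB} : MModel L) (contAns A (evalKB L KB A)) := by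
  unfold evalKB
  split_ifs with h
  · simpa [contAns, Sat] using h
  · simpa [contAns, MFml.neg, Sat] using h

theorem aux_not_refuse {L : Logic} (Cens : Censor L)
    (htruth : Truthful Cens) (heff : Effective Cens)
    (hmin : MinimallyInvasive Cens)
    (PK : PrivacyConfig L) (q : ℕ → L.Fml) (k m : ℕ) (hq : q k = q m)
    (hk : Cens PK q k = evalKB L PK.KB (q k)) :
    Cens PK q m = evalKB L PK.KB (q m) := by
  classical
  by_contra hm
  let Cens' : Censor L := fun P p a =>
    if a = m then evalKB L P.KB (p a) else Cens P p a
  obtain ⟨n, ⟨s, hs, hent⟩ | hsat⟩ := hmin PK q m hm Cens'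
    (fun a ha => by simp [Cens', ha.ne]) (by simp [Cens'])
  · refine heff PK q (max n (k + 1)) s hs fun M hM => hent M fun F hF => hM F ?_
    rcases hF with ⟨a, ha, rfl⟩ | hF
    · left
      by_cases h : a = m
      · refine ⟨k, by omega, ?_⟩
        simp [Cens', h, hk, hq]
      · exact ⟨a, by omega, by simp [Cens', h]⟩
    · exact Or.inr hF
  · apply hsat
    refine ⟨{PK.KB}, fun F hF => ?_⟩
    rcases hF with ⟨a, ha, rfl⟩ | hF
    · by_cases h : a = m
      · simpa [Cens', h] using aux_sat_eval PK.KB (q m)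
      · rcases htruth PK q a with h' | h'
        · simpa [Cens', h, h'] using aux_sat_eval PK.KB (q a)
        · simp [Cens', h, h', contAns, MFml.top, Sat]
    · exact PK.truthfulStart F hF

/-- A truthful, effective and minimally invasive censor answers
the same query always in the same way. -/
theorem same_query_same_answer {L : Logic} (Cens : Censor L)
    (htruth : Truthful Cens) (heff : Effective Cens)
    (hmin : MinimallyInvasive Cens)
    (PK : PrivacyConfig L) (q : ℕ → L.Fml) (i j : ℕ) (hq : q i = q j) :
    Cens PK q i = Cens PK q j := by
  rcases htruth PK q i with h | h
  · rw [aux_not_refuse Cens htruth heff hmin PK q i j hq h, h, hq]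
  · rcases htruth PK q j with h' | h'
    · rw [aux_not_refuse Cens htruth heff hmin PK q j i hq.symm h', h', hq]
    · rw [h, h']
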